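/- The matrices B = [[0, s], [t, 1 - st]] and P₂ = [[0, s], [t, st - 1]] over ℤ[s^{±1}, t^{±1}] satisfy the three mixed Yang–Baxter equations: (P₂)₁₂ (P₂)₂₃ B₁₂ = B₂₃ (P₂)₁₂ (P₂)₂₃, (P₂)₁₂ B₂₃ (P₂)₁₂ = (P₂)₂₃ B₁₂ (P₂)₂₃, and B₁₂ (P₂)₂₃ (P₂)₁₂ = (P₂)₂₃ (P₂)₁₂ B₂₃. -/

import Mathlib

/- STATEMENT 3: B = [[0, s], [t, 1 - st]] and P₂ = [[0, s], [t, st - 1]] over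
ℤ[s^{±1}, t^{±1}] satisfy the three mixed Yang–Baxter equations
(P₂)₁₂ (P₂)₂₃ B₁₂ = B₂₃ (P₂)₁₂ (P₂)₂₃,  (P₂)₁₂ B₂₃ (P₂)₁₂ = (P₂)₂₃ B₁₂ (P₂)₂₃,
B₁₂ (P₂)₂₃ (P₂)₁₂ = (P₂)₂₃ (P₂)₁₂ B₂₃. -/

open LaurentPolynomial

noncomputable abbrev R₃ : Type := LaurentPolynomial (LaurentPolynomial ℤ)

noncomputable def s₃ : R₃ := T 1
noncomputable def t₃ : R₃ := C (T 1)

noncomputable def m12 (M : Matrix (Fin 2) (Fin 2) R₃) : Matrix (Fin 3) (Fin 3) R₃ :=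
  !![M 0 0, M 0 1, 0; M 1 0, M 1 1, 0; 0, 0, 1]

noncomputable def m23 (M : Matrix (Fin 2) (Fin 2) R₃) : Matrix (Fin 3) (Fin 3) R₃ :=
  !![1, 0, 0; 0, M 0 0, M 0 1; 0, M 1 0, M 1 1]

noncomputable def B₃ : Matrix (Fin 2) (Fin 2) R₃ := !![0, s₃; t₃, 1 - s₃ * t₃]

noncomputable def P₃' : Matrix (Fin 2) (Fin 2) R₃ := !![0, s₃; t₃, s₃ * t₃ - 1]

/-! Both matrices have the form `X = [[0, s], [t, x]]`. For three such matrices, with corners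
`x`, `y`, `z`, the triple products `X₁₂ Y₂₃ Z₁₂` and `Z₂₃ Y₁₂ X₂₃` agree in every entry except
the bottom right one, where they are `y` and `s t y + z x`. Each mixed Yang–Baxter equation is
therefore the single scalar equation `y = s t y + z x`. When `B` has corner `1 - s t` and `P` has
corner `p`, this is an identity for two of the three equations, and it says `p² = (1 - s t)²` for
the remaining one. Over a domain this leaves only `P = B` and `P = P₂`. -/

section YangBaxter

variable {R : Type*}

/-- The operator `M₁₂`: the 2×2 matrix `M` acting on the first two of three coordinates. -/
def embedUpperLeft [Zero R] [One R] (M : Matrix (Fin 2) (Fin 2) R) : Matrix (Fin 3) (Fin 3) R :=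
  !![M 0 0, M 0 1, 0; M 1 0, M 1 1, 0; 0, 0, 1]

/-- The operator `M₂₃`: the 2×2 matrix `M` acting on the last two of three coordinates. -/
def embedLowerRight [Zero R] [One R] (M : Matrix (Fin 2) (Fin 2) R) : Matrix (Fin 3) (Fin 3) R :=
  !![1, 0, 0; 0, M 0 0, M 0 1; 0, M 1 0, M 1 1]

/-- The common shape of `B` and `P₂`, with the bottom right entry `x` left free. The corner
`x = 1 - s * t` gives a two-parameter form of the Burau matrix. -/
def burauBlock [Zero R] (s t x : R) : Matrix (Fin 2) (Fin 2) R := !![0, s; t, x]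

section CommSemiring

variable [CommSemiring R]

lemma upperLeft_mul_lowerRight_mul_upperLeft (s t x y z : R) :
    embedUpperLeft (burauBlock s t x) * embedLowerRight (burauBlock s t y) *
        embedUpperLeft (burauBlock s t z) =
      !![0, 0, s ^ 2; 0, s * t, s * x; t ^ 2, t * z, y] := by
  simp [embedUpperLeft, embedLowerRight, burauBlock, sq, mul_comm]

lemma lowerRight_mul_upperLeft_mul_lowerRight (s t x y z : R) :
    embedLowerRight (burauBlock s t z) * embedUpperLeft (burauBlock s t y) *
        embedLowerRight (burauBlock s t x) =
      !![0, 0, s ^ 2; 0, s * t, s * x; t ^ 2, t * z, s * t * y + z * x] := by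
  simp [embedUpperLeft, embedLowerRight, burauBlock, sq, mul_comm, mul_left_comm]

lemma mixed_yangBaxter_burauBlock {s t x y z : R} (corner_eq : y = s * t * y + z * x) :
    embedUpperLeft (burauBlock s t x) * embedLowerRight (burauBlock s t y) *
        embedUpperLeft (burauBlock s t z) =
      embedLowerRight (burauBlock s t z) * embedUpperLeft (burauBlock s t y) *
        embedLowerRight (burauBlock s t x) := by
  rw [upperLeft_mul_lowerRight_mul_upperLeft, lowerRight_mul_upperLeft_mul_lowerRight,
    ← corner_eq]

end CommSemiring

theorem stmt_3_general [CommRing R] (s t p : R) (hp : p ^ 2 = (1 - s * t) ^ 2) :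
    embedUpperLeft (burauBlock s t p) * embedLowerRight (burauBlock s t p) *
          embedUpperLeft (burauBlock s t (1 - s * t)) =
        embedLowerRight (burauBlock s t (1 - s * t)) * embedUpperLeft (burauBlock s t p) *
          embedLowerRight (burauBlock s t p) ∧
      embedUpperLeft (burauBlock s t p) * embedLowerRight (burauBlock s t (1 - s * t)) *
          embedUpperLeft (burauBlock s t p) =
        embedLowerRight (burauBlock s t p) * embedUpperLeft (burauBlock s t (1 - s * t)) *
          embedLowerRight (burauBlock s t p) ∧
      embedUpperLeft (burauBlock s t (1 - s * t)) * embedLowerRight (burauBlock s t p) *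
          embedUpperLeft (burauBlock s t p) =
        embedLowerRight (burauBlock s t p) * embedUpperLeft (burauBlock s t p) *
          embedLowerRight (burauBlock s t (1 - s * t)) := by
  have corner_PPB : p = s * t * p + (1 - s * t) * p := by ring
  have corner_PBP : 1 - s * t = s * t * (1 - s * t) + p * p := by linear_combination -hp
  have corner_BPP : p = s * t * p + p * (1 - s * t) := by ring
  exact ⟨mixed_yangBaxter_burauBlock corner_PPB, mixed_yangBaxter_burauBlock corner_PBP,
    mixed_yangBaxter_burauBlock corner_BPP⟩

end YangBaxter

theorem stmt_3 :
    m12 P₃' * m23 P₃' * m12 B₃ = m23 B₃ * m12 P₃' * m23 P₃' ∧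
    m12 P₃' * m23 B₃ * m12 P₃' = m23 P₃' * m12 B₃ * m23 P₃' ∧
    m12 B₃ * m23 P₃' * m12 P₃' = m23 P₃' * m12 P₃' * m23 B₃ :=
  stmt_3_general s₃ t₃ (s₃ * t₃ - 1) (by ring)
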